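/- arXiv:1404.3372 — 9 statements merged into one kernel-verified Lean document; each statement's English description precedes it below -/
import Mathlib

section
/- Let λ₁, λ₂ > 0, σ₁, σ₂ > 0 and r > 0, μ₁, μ₂ ∈ ℝ. Then the equation w₁(z)w₂(z) − λ₁λ₂ = 0 has exactly four distinct real solutions z₁ < z₂ < z₃ < z₄; moreover z₂ < 0 < z₃ and w₁(z₃) > 0. -/
/-!
Each `wᵢ` is a concave quadratic with `wᵢ(0) = r + λᵢ > 0`, and `w₁(0) w₂(0) > λ₁ λ₂`. Moving from
`0` to `+∞`, the product of the positive parts of `w₁` and `w₂` goes from `w₁(0) w₂(0)` to `0`,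
and then the product of their negative parts goes from `0` to `+∞`. Each of the two products takes
the value `λ₁ λ₂`, and there `w₁` and `w₂` are both positive, respectively both negative. The same
happens from `0` to `-∞`, and a quartic has no more than these four roots.
-/

open Filter Polynomial Set

lemma exists_pos_mul_eq {X R : Type*} [TopologicalSpace X] [Semiring R] [LinearOrder R]
    [IsStrictOrderedRing R] [TopologicalSpace R] [OrderClosedTopology R] [ContinuousMul R]
    {f g : X → R} {s : Set X} {a b : X} {k : R} (hs : IsPreconnected s)
    (hf : ContinuousOn f s) (hg : ContinuousOn g s) (ha : a ∈ s) (hb : b ∈ s) (hfa : 0 < f a)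
    (hk : 0 < k) (hka : k ≤ f a * g a) (hfb : f b ≤ 0) :
    ∃ x ∈ s, 0 < f x ∧ 0 < g x ∧ f x * g x = k := by
  have hcont : ContinuousOn (fun x ↦ max (f x) 0 * max (g x) 0) s :=
    (hf.sup continuousOn_const).mul (hg.sup continuousOn_const)
  have hga : 0 < g a := pos_of_mul_pos_right (hk.trans_le hka) hfa.le
  obtain ⟨x, hxs, hx⟩ := hs.intermediate_value hb ha hcont (show k ∈ Icc _ _ by
    simpa only [max_eq_right hfb, max_eq_left hfa.le, max_eq_left hga.le, zero_mul]
      using ⟨hk.le, hka⟩)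
  have hfx : 0 < f x := by by_contra! h; simp [h, hk.ne] at hx
  have hgx : 0 < g x := by by_contra! h; simp [h, hk.ne] at hx
  exact ⟨x, hxs, hfx, hgx, by simpa only [max_eq_left hfx.le, max_eq_left hgx.le] using hx⟩

section HalfLine

variable {α R : Type*} [ConditionallyCompleteLinearOrder α] [DenselyOrdered α] [TopologicalSpace α]
  [OrderTopology α] [Ring R] [LinearOrder R] [IsStrictOrderedRing R] [TopologicalSpace R]
  [OrderClosedTopology R] [IsTopologicalRing R] {f g : α → R} {a : α} {k : R}

lemma exists_two_gt_mul_eq (hf : ContinuousOn f (Ici a)) (hg : ContinuousOn g (Ici a))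
    (hf_top : Tendsto f atTop atBot) (hg_top : Tendsto g atTop atBot)
    (hfa : 0 < f a) (hk : 0 < k) (hka : k < f a * g a) :
    ∃ x y, a < x ∧ x < y ∧ 0 < f x ∧ f x * g x = k ∧ f y * g y = k := by
  have : Nonempty α := ⟨a⟩
  obtain ⟨b, hab, hfb⟩ := ((eventually_ge_atTop a).and (hf_top.eventually_le_atBot 0)).exists
  obtain ⟨x, hax, hfx, hgx, hx⟩ :=
    exists_pos_mul_eq isPreconnected_Ici hf hg self_mem_Ici hab hfa hk hka.le hfb
  obtain ⟨c, hxc, hfc, hc⟩ := ((eventually_ge_atTop x).and ((hf_top.eventually_lt_atBot 0).and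
    ((hf_top.atBot_mul_atBot₀ hg_top).eventually_ge_atTop k))).exists
  have hsub : Ici x ⊆ Ici a := Ici_subset_Ici.mpr hax
  obtain ⟨y, hxy, hfy, -, hy⟩ := exists_pos_mul_eq isPreconnected_Ici (hf.mono hsub).neg
    (hg.mono hsub).neg hxc self_mem_Ici (neg_pos.mpr hfc) hk (by simpa using hc)
    (neg_nonpos.mpr hfx.le)
  have hax' : a ≠ x := by rintro rfl; exact hka.ne' hx
  have hxy' : x ≠ y := by rintro rfl; exact hfx.not_gt (neg_pos.mp hfy)
  exact ⟨x, y, lt_of_le_of_ne hax hax', lt_of_le_of_ne hxy hxy', hfx, hx, by simpa using hy⟩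

lemma exists_two_lt_mul_eq (hf : ContinuousOn f (Iic a)) (hg : ContinuousOn g (Iic a))
    (hf_bot : Tendsto f atBot atBot) (hg_bot : Tendsto g atBot atBot)
    (hfa : 0 < f a) (hk : 0 < k) (hka : k < f a * g a) :
    ∃ x y, x < y ∧ y < a ∧ f x * g x = k ∧ f y * g y = k := by
  obtain ⟨y, x, hya, hxy, -, hy, hx⟩ :=
    exists_two_gt_mul_eq (α := αᵒᵈ) hf hg hf_bot hg_bot hfa hk hka
  exact ⟨x, y, hxy, hya, hx, hy⟩

end HalfLine

lemma tendsto_eval_atBot_atBot_of_even {𝕜 : Type*} [NormedField 𝕜] [LinearOrder 𝕜]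
    [IsStrictOrderedRing 𝕜] [OrderTopology 𝕜] {p : 𝕜[X]} (hdeg : 0 < p.degree)
    (heven : Even p.natDegree) (hlead : p.leadingCoeff ≤ 0) :
    Tendsto (fun x ↦ p.eval x) atBot atBot := by
  have hlead' : (p.comp (-X)).leadingCoeff ≤ 0 := by
    rwa [comp_neg_X_leadingCoeff_eq, heven.neg_one_pow, one_mul]
  simpa [Function.comp_def] using ((p.comp (-X)).tendsto_atBot_of_leadingCoeff_nonpos
    (by rwa [degree_comp_neg_X]) hlead').comp tendsto_neg_atBot_atTop

lemma eval_eq_iff_mem_of_natDegree_le_card {R : Type*} [CommRing R] [IsDomain R] {p : R[X]} {k : R}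
    {S : Finset R} (hp : 0 < p.natDegree) (hS : ∀ x ∈ S, p.eval x = k)
    (hcard : p.natDegree ≤ S.card) (z : R) : p.eval z = k ↔ z ∈ S := by
  have hne : p - C k ≠ 0 := ne_zero_of_natDegree_gt (n := 0) (by rwa [natDegree_sub_C])
  have hroots : (p - C k).roots = S.val := roots_eq_of_natDegree_le_card_of_ne_zero
    (fun x hx ↦ by simp [hS x hx]) (by rwa [natDegree_sub_C]) hne
  rw [← Finset.mem_val, ← hroots, mem_roots hne, IsRoot, eval_sub, eval_C, sub_eq_zero]

lemma exists_four_eval_mul_eq {p q : ℝ[X]} (hp : p.natDegree = 2) (hq : q.natDegree = 2)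
    (hp_lead : p.leadingCoeff ≤ 0) (hq_lead : q.leadingCoeff ≤ 0) {a k : ℝ} (hpa : 0 < p.eval a)
    (hk : 0 < k) (hka : k < p.eval a * q.eval a) :
    ∃ z₁ z₂ z₃ z₄, z₁ < z₂ ∧ z₂ < a ∧ a < z₃ ∧ z₃ < z₄ ∧ 0 < p.eval z₃ ∧
      ∀ z, p.eval z * q.eval z = k ↔ z = z₁ ∨ z = z₂ ∨ z = z₃ ∨ z = z₄ := by
  have hp_pos : 0 < p.degree := natDegree_pos_iff_degree_pos.mp (by lia)
  have hq_pos : 0 < q.degree := natDegree_pos_iff_degree_pos.mp (by lia)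
  obtain ⟨z₃, z₄, haz₃, hz₃₄, hpz₃, h₃, h₄⟩ := exists_two_gt_mul_eq p.continuousOn q.continuousOn
    (p.tendsto_atBot_of_leadingCoeff_nonpos hp_pos hp_lead)
    (q.tendsto_atBot_of_leadingCoeff_nonpos hq_pos hq_lead) hpa hk hka
  obtain ⟨z₁, z₂, hz₁₂, hz₂a, h₁, h₂⟩ := exists_two_lt_mul_eq p.continuousOn q.continuousOn
    (tendsto_eval_atBot_atBot_of_even hp_pos (by simp [hp]) hp_lead)
    (tendsto_eval_atBot_atBot_of_even hq_pos (by simp [hq]) hq_lead) hpa hk hka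
  have hpq : (p * q).natDegree = 4 := by
    rw [natDegree_mul (ne_zero_of_degree_gt hp_pos) (ne_zero_of_degree_gt hq_pos), hp, hq]
  have hcard : ({z₁, z₂, z₃, z₄} : Finset ℝ).card = 4 := by grind
  refine ⟨z₁, z₂, z₃, z₄, hz₁₂, hz₂a, haz₃, hz₃₄, hpz₃, fun z ↦ ?_⟩
  rw [← eval_mul, eval_eq_iff_mem_of_natDegree_le_card (S := {z₁, z₂, z₃, z₄}) (by lia)
    (by simp [h₁, h₂, h₃, h₄]) (by lia)]
  simp only [Finset.mem_insert, Finset.mem_singleton]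

section RegimePolynomial

/-- The quadratic `w(z) = r + l - m z - (s² / 2) z (z - 1)` attached to one regime, as a polynomial
written by its coefficients, so that its degree and leading coefficient can be read off. -/
noncomputable def regimePolynomial (r l m s : ℝ) : ℝ[X] :=
  C (-(s ^ 2 / 2)) * X ^ 2 + C (s ^ 2 / 2 - m) * X + C (r + l)

variable (r l m s : ℝ)

lemma eval_regimePolynomial (z : ℝ) :
    (regimePolynomial r l m s).eval z = r + l - m * z - s ^ 2 / 2 * z * (z - 1) := by
  simp only [regimePolynomial, eval_add, eval_mul, eval_C, eval_pow, eval_X]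
  ring

variable {s}

lemma natDegree_regimePolynomial (hs : s ≠ 0) : (regimePolynomial r l m s).natDegree = 2 :=
  natDegree_quadratic (by simpa using hs)

lemma leadingCoeff_regimePolynomial_nonpos (hs : s ≠ 0) :
    (regimePolynomial r l m s).leadingCoeff ≤ 0 := by
  rw [regimePolynomial, leadingCoeff_quadratic (by simpa using hs), neg_nonpos]
  positivity

end RegimePolynomial

/-- For λ₁, λ₂ > 0, σ₁, σ₂ > 0, r > 0, μ₁, μ₂ ∈ ℝ, the equation
w₁(z)w₂(z) − λ₁λ₂ = 0, where wᵢ(z) = r + λᵢ − μᵢ z − (σᵢ²/2) z(z−1), has exactly four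
distinct real solutions z₁ < z₂ < z₃ < z₄ with z₂ < 0 < z₃ and w₁(z₃) > 0. -/
theorem stmt_0 (l1 l2 s1 s2 r m1 m2 : ℝ)
    (hl1 : 0 < l1) (hl2 : 0 < l2) (hs1 : 0 < s1) (hs2 : 0 < s2) (hr : 0 < r)
    (w1 w2 : ℝ → ℝ)
    (hw1 : ∀ z, w1 z = r + l1 - m1 * z - s1 ^ 2 / 2 * z * (z - 1))
    (hw2 : ∀ z, w2 z = r + l2 - m2 * z - s2 ^ 2 / 2 * z * (z - 1)) :
    ∃ z1 z2 z3 z4 : ℝ, z1 < z2 ∧ z2 < z3 ∧ z3 < z4 ∧ z2 < 0 ∧ 0 < z3 ∧ 0 < w1 z3 ∧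
      ∀ z : ℝ, w1 z * w2 z - l1 * l2 = 0 ↔ (z = z1 ∨ z = z2 ∨ z = z3 ∨ z = z4) := by
  obtain rfl : w1 = fun z ↦ (regimePolynomial r l1 m1 s1).eval z :=
    funext fun z ↦ (hw1 z).trans (eval_regimePolynomial ..).symm
  obtain rfl : w2 = fun z ↦ (regimePolynomial r l2 m2 s2).eval z :=
    funext fun z ↦ (hw2 z).trans (eval_regimePolynomial ..).symm
  have hw1_zero : (regimePolynomial r l1 m1 s1).eval 0 = r + l1 := by simp [eval_regimePolynomial]
  have hw2_zero : (regimePolynomial r l2 m2 s2).eval 0 = r + l2 := by simp [eval_regimePolynomial]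
  have hprod : l1 * l2 < (r + l1) * (r + l2) := by gcongr <;> linarith
  obtain ⟨z1, z2, z3, z4, h12, h20, h03, h34, hpos, hsol⟩ := exists_four_eval_mul_eq
    (natDegree_regimePolynomial r l1 m1 hs1.ne') (natDegree_regimePolynomial r l2 m2 hs2.ne')
    (leadingCoeff_regimePolynomial_nonpos r l1 m1 hs1.ne')
    (leadingCoeff_regimePolynomial_nonpos r l2 m2 hs2.ne')
    (hw1_zero ▸ add_pos hr hl1) (mul_pos hl1 hl2) (by rwa [hw1_zero, hw2_zero])
  exact ⟨z1, z2, z3, z4, h12, h20.trans h03, h34, h20, h03, hpos, fun z ↦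
    sub_eq_zero.trans (hsol z)⟩
end

section
/- Let λ₁, λ₂ > 0, σ₁, σ₂ > 0, r > 0 and μ₁ ≤ μ₂ real, and let z₃ be the third (in increasing order) of the four distinct real solutions of w₁(z)w₂(z) − λ₁λ₂ = 0. If r > x₂, then z₃ > 1. -/
/-!
The roots `x₁ < x₂` solve `(x + λ₁ - μ₁) (x + λ₂ - μ₂) = λ₁ λ₂`, and at the larger one both factors
are positive. If `r > x₂`, then `wᵢ 1 = r + λᵢ - μᵢ` exceeds these factors, so `w₁ 1 > 0` and
`w₁ 1 * w₂ 1 > λ₁ λ₂`. As `w₁` tends to `-∞`, it vanishes at some `b > 1`, where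
`w₁ b * w₂ b = 0 < λ₁ λ₂`, whereas `w₁ w₂` tends to `+∞`. So `w₁ w₂` takes the value `λ₁ λ₂` once
in `(1, b)` and once beyond `b`, and at most one of the four roots lies above `z₃`.
-/

open Filter Set

section IntermediateValue

variable {α 𝕜 : Type*} [ConditionallyCompleteLinearOrder α] [DenselyOrdered α]
  [TopologicalSpace α] [OrderTopology α] {a : α}

theorem exists_gt_eq_of_tendsto_atTop [LinearOrder 𝕜] [TopologicalSpace 𝕜] [OrderClosedTopology 𝕜]
    {f : α → 𝕜} {c : 𝕜} (hf : ContinuousOn f (Ici a)) (hac : f a < c)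
    (hf_top : Tendsto f atTop atTop) : ∃ x > a, f x = c := by
  have : Nonempty α := ⟨a⟩
  obtain ⟨x, hax, rfl⟩ := isPreconnected_Ici.intermediate_value_Ici self_mem_Ici
    (le_principal_iff.2 (Ici_mem_atTop a)) hf hf_top hac.le
  exact ⟨x, lt_of_le_of_ne hax (ne_of_apply_ne f hac.ne), rfl⟩

theorem exists_gt_eq_of_tendsto_atBot [LinearOrder 𝕜] [TopologicalSpace 𝕜] [OrderClosedTopology 𝕜]
    {f : α → 𝕜} {c : 𝕜} (hf : ContinuousOn f (Ici a)) (hca : c < f a)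
    (hf_bot : Tendsto f atTop atBot) : ∃ x > a, f x = c :=
  exists_gt_eq_of_tendsto_atTop (𝕜 := 𝕜ᵒᵈ) hf hca hf_bot

theorem exists_lt_lt_mul_eq_of_tendsto_atBot [Field 𝕜] [LinearOrder 𝕜] [IsStrictOrderedRing 𝕜]
    [TopologicalSpace 𝕜] [OrderTopology 𝕜] {f g : α → 𝕜} {c : 𝕜}
    (hf : ContinuousOn f (Ici a)) (hg : ContinuousOn g (Ici a))
    (hf_bot : Tendsto f atTop atBot) (hg_bot : Tendsto g atTop atBot)
    (hfa : 0 < f a) (hc : 0 < c) (hca : c < f a * g a) :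
    ∃ p q, a < p ∧ p < q ∧ f p * g p = c ∧ f q * g q = c := by
  have hfg : ContinuousOn (fun x ↦ f x * g x) (Ici a) := hf.mul hg
  obtain ⟨b, hab, hfb⟩ := exists_gt_eq_of_tendsto_atBot hf hfa hf_bot
  have hbc : f b * g b < c := by rwa [hfb, zero_mul]
  obtain ⟨p, ⟨hap, hpb⟩, hp⟩ :=
    intermediate_value_Ioo' hab.le (hfg.mono Icc_subset_Ici_self) ⟨hbc, hca⟩
  obtain ⟨q, hbq, hq⟩ := exists_gt_eq_of_tendsto_atTop (hfg.mono (Ici_subset_Ici.2 hab.le)) hbc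
    (hf_bot.atBot_mul_atBot₀ hg_bot)
  exact ⟨p, q, hap, hpb.trans hbq, hp, hq⟩

end IntermediateValue

theorem tendsto_quadratic_atTop_atBot {𝕜 : Type*} [Field 𝕜] [LinearOrder 𝕜]
    [IsStrictOrderedRing 𝕜] {a : 𝕜} (ha : a < 0) (b c : 𝕜) :
    Tendsto (fun x ↦ a * x ^ 2 + b * x + c) atTop atBot := by
  have hlin : Tendsto (fun x ↦ a * x + b) atTop atBot :=
    tendsto_atBot_add_const_right _ b (tendsto_id.const_mul_atTop_of_neg ha)
  refine (tendsto_atBot_add_const_right _ c (tendsto_id.atTop_mul_atBot₀ hlin)).congr fun x ↦ ?_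
  simp only [id]
  ring

/-- The quadratic `w` of a regime, `κ` being the discount rate plus the switching rate: for the
generator `L` of geometric Brownian motion with drift `μ` and volatility `σ`, it is the factor by
which `κ - L` multiplies the power function `x ↦ x ^ z`. -/
noncomputable def regimeQuadratic (κ μ σ z : ℝ) : ℝ :=
  κ - μ * z - σ ^ 2 / 2 * z * (z - 1)

theorem regimeQuadratic_one (κ μ σ : ℝ) : regimeQuadratic κ μ σ 1 = κ - μ := by
  simp [regimeQuadratic]

theorem continuous_regimeQuadratic (κ μ σ : ℝ) : Continuous (regimeQuadratic κ μ σ) := by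
  unfold regimeQuadratic
  fun_prop

theorem tendsto_regimeQuadratic_atTop_atBot (κ μ : ℝ) {σ : ℝ} (hσ : σ ≠ 0) :
    Tendsto (regimeQuadratic κ μ σ) atTop atBot := by
  have hlead : -(σ ^ 2 / 2) < 0 := neg_neg_of_pos (by positivity)
  refine (tendsto_quadratic_atTop_atBot hlead (σ ^ 2 / 2 - μ) κ).congr fun z ↦ ?_
  rw [regimeQuadratic]
  ring

theorem add_pos_and_add_pos_of_larger_root {R : Type*} [CommRing R] [LinearOrder R]
    [IsStrictOrderedRing R] {a b c x y : R} (hxy : x < y) (hx : (x + a) * (x + b) = c)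
    (hy : (y + a) * (y + b) = c) (hc : 0 < c) : 0 < y + a ∧ 0 < y + b := by
  have hsum : (y + a) + (y + b) = y - x :=
    mul_left_cancel₀ (sub_pos.2 hxy).ne' (by linear_combination hy - hx)
  have hsum_pos : 0 < (y + a) + (y + b) := hsum ▸ sub_pos.2 hxy
  exact (mul_pos_iff.1 (hy ▸ hc)).resolve_right fun ⟨ha, hb⟩ ↦ (add_neg ha hb).not_gt hsum_pos

theorem lt_of_two_gt_among_four {α : Type*} [LinearOrder α] {a p q z₁ z₂ z₃ z₄ : α}
    (h₁₃ : z₁ ≤ z₃) (h₂₃ : z₂ ≤ z₃) (hap : a < p) (hpq : p < q)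
    (hp : p = z₁ ∨ p = z₂ ∨ p = z₃ ∨ p = z₄) (hq : q = z₁ ∨ q = z₂ ∨ q = z₃ ∨ q = z₄) :
    a < z₃ := by
  by_contra! hle
  have eq_of_gt : ∀ z, a < z → (z = z₁ ∨ z = z₂ ∨ z = z₃ ∨ z = z₄) → z = z₄ := by grind
  exact hpq.ne ((eq_of_gt p hap hp).trans (eq_of_gt q (hap.trans hpq) hq).symm)

theorem stmt_1_general {l1 l2 s1 s2 r m1 m2 : ℝ}
    (hl : 0 < l1 * l2) (hs1 : s1 ≠ 0) (hs2 : s2 ≠ 0) {w1 w2 : ℝ → ℝ}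
    (hw1 : ∀ z, w1 z = r + l1 - m1 * z - s1 ^ 2 / 2 * z * (z - 1))
    (hw2 : ∀ z, w2 z = r + l2 - m2 * z - s2 ^ 2 / 2 * z * (z - 1))
    {x1 x2 : ℝ} (hx12 : x1 < x2)
    (hx1 : x1 ^ 2 + (l1 - m1 + l2 - m2) * x1 + (l1 - m1) * (l2 - m2) - l1 * l2 = 0)
    (hx2 : x2 ^ 2 + (l1 - m1 + l2 - m2) * x2 + (l1 - m1) * (l2 - m2) - l1 * l2 = 0)
    (hrx : x2 < r) :
    ∃ p q, 1 < p ∧ p < q ∧ w1 p * w2 p - l1 * l2 = 0 ∧ w1 q * w2 q - l1 * l2 = 0 := by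
  obtain rfl : w1 = regimeQuadratic (r + l1) m1 s1 := funext hw1
  obtain rfl : w2 = regimeQuadratic (r + l2) m2 s2 := funext hw2
  have hx2' : (x2 + (l1 - m1)) * (x2 + (l2 - m2)) = l1 * l2 := by linear_combination hx2
  obtain ⟨hpos1, hpos2⟩ :=
    add_pos_and_add_pos_of_larger_root hx12 (by linear_combination hx1) hx2' hl
  have hlt1 : x2 + (l1 - m1) < regimeQuadratic (r + l1) m1 s1 1 := by
    linarith [regimeQuadratic_one (r + l1) m1 s1]
  have hlt2 : x2 + (l2 - m2) < regimeQuadratic (r + l2) m2 s2 1 := by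
    linarith [regimeQuadratic_one (r + l2) m2 s2]
  simp only [sub_eq_zero]
  exact exists_lt_lt_mul_eq_of_tendsto_atBot
    (continuous_regimeQuadratic _ _ _).continuousOn (continuous_regimeQuadratic _ _ _).continuousOn
    (tendsto_regimeQuadratic_atTop_atBot _ _ hs1)
    (tendsto_regimeQuadratic_atTop_atBot _ _ hs2)
    (hpos1.trans hlt1) hl (hx2' ▸ mul_lt_mul'' hlt1 hlt2 hpos1.le hpos2.le)

/-- With λ₁, λ₂, σ₁, σ₂ > 0, r > 0, μ₁ ≤ μ₂, if z₃ is the third of the four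
distinct real solutions of w₁(z)w₂(z) − λ₁λ₂ = 0 and x₂ is the larger root of
x² + (λ₁−μ₁+λ₂−μ₂)x + (λ₁−μ₁)(λ₂−μ₂) − λ₁λ₂ = 0, then r > x₂ implies z₃ > 1. -/
theorem stmt_1 (l1 l2 s1 s2 r m1 m2 : ℝ)
    (hl1 : 0 < l1) (hl2 : 0 < l2) (hs1 : 0 < s1) (hs2 : 0 < s2) (hr : 0 < r)
    (hm : m1 ≤ m2)
    (w1 w2 : ℝ → ℝ)
    (hw1 : ∀ z, w1 z = r + l1 - m1 * z - s1 ^ 2 / 2 * z * (z - 1))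
    (hw2 : ∀ z, w2 z = r + l2 - m2 * z - s2 ^ 2 / 2 * z * (z - 1))
    (z1 z2 z3 z4 : ℝ) (h12 : z1 < z2) (h23 : z2 < z3) (h34 : z3 < z4)
    (hroots : ∀ z : ℝ, w1 z * w2 z - l1 * l2 = 0 ↔ (z = z1 ∨ z = z2 ∨ z = z3 ∨ z = z4))
    (x1 x2 : ℝ) (hx12 : x1 < x2)
    (hxroots : ∀ x : ℝ, x ^ 2 + (l1 - m1 + l2 - m2) * x + (l1 - m1) * (l2 - m2) - l1 * l2 = 0
        ↔ (x = x1 ∨ x = x2))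
    (hrx : x2 < r) :
    1 < z3 := by
  obtain ⟨p, q, h1p, hpq, hp, hq⟩ := stmt_1_general (mul_pos hl1 hl2) hs1.ne' hs2.ne' hw1 hw2 hx12
    ((hxroots x1).2 (.inl rfl)) ((hxroots x2).2 (.inr rfl)) hrx
  exact lt_of_two_gt_among_four (h12.trans h23).le h23.le h1p hpq
    ((hroots p).1 hp) ((hroots q).1 hq)
end

section
/- Let λ₁, λ₂ > 0 and μ₁ ≤ μ₂ real. The quadratic equation x² + (λ₁ − μ₁ + λ₂ − μ₂)x + (λ₁ − μ₁)(λ₂ − μ₂) − λ₁λ₂ = 0 has two distinct real roots x₁ < x₂. If μ₁ < μ₂ then x₁ < μ₁ < x₂ < μ₂; if μ₁ = μ₂ then x₁ = μ₁ − λ₁ − λ₂ and x₂ = μ₁. -/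
/-!
Write `p` for the quadratic; it is `(x + l1 - m1) * (x + l2 - m2) - l1 * l2`, so
`p m1 = l1 * (m1 - m2)` and `p m2 = l2 * (m2 - m1)`. When `m1 < m2` this gives `p m1 < 0 < p m2`.
A monic quadratic that is negative at a point has a root on each side of that point, and since
`p m2 > 0` with `m2` to the right of the smaller root, `m2` lies to the right of both.
When `m1 = m2`, the point `m1` is itself a root and `p` factors explicitly.
-/

theorem discrim_pos_of_mul_quadratic_neg {R : Type*} [CommRing R] [LinearOrder R]
    [IsStrictOrderedRing R] {a b c y : R} (h : a * (a * (y * y) + b * y + c) < 0) :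
    0 < discrim a b c := by
  have hdiscrim : discrim a b c =
      (2 * a * y + b) ^ 2 - 4 * (a * (a * (y * y) + b * y + c)) := by
    rw [discrim]; ring
  linarith [sq_nonneg (2 * a * y + b)]

theorem quadratic_eq_mul_of_discrim_eq_mul_self {K : Type*} [Field K] [NeZero (2 : K)]
    {a b c s : K} (ha : a ≠ 0) (h : discrim a b c = s * s) (x : K) :
    a * (x * x) + b * x + c =
      a * ((x - (-b + s) / (2 * a)) * (x - (-b - s) / (2 * a))) := by
  rw [discrim] at h
  have h2 : (2 : K) ≠ 0 := NeZero.ne 2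
  field_simp
  linear_combination -h

theorem exists_lt_lt_quadratic_eq_mul {a b c y : ℝ}
    (h : a * (a * (y * y) + b * y + c) < 0) :
    ∃ x₁ x₂ : ℝ, x₁ < y ∧ y < x₂ ∧
      ∀ x, a * (x * x) + b * x + c = a * ((x - x₁) * (x - x₂)) := by
  have ha : a ≠ 0 := left_ne_zero_of_mul h.ne
  obtain ⟨u, v, hfactor⟩ :
      ∃ u v : ℝ, ∀ x, a * (x * x) + b * x + c = a * ((x - u) * (x - v)) :=
    ⟨_, _, quadratic_eq_mul_of_discrim_eq_mul_self ha
      (Real.mul_self_sqrt (discrim_pos_of_mul_quadratic_neg h).le).symm⟩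
  have hneg : (y - u) * (y - v) < 0 := by
    rw [hfactor, ← mul_assoc] at h
    exact neg_of_mul_neg_right h (mul_self_nonneg a)
  obtain ⟨hu, hv⟩ | ⟨hu, hv⟩ := mul_neg_iff.1 hneg
  · exact ⟨u, v, sub_pos.1 hu, sub_neg.1 hv, hfactor⟩
  · exact ⟨v, u, sub_pos.1 hv, sub_neg.1 hu, fun x => by rw [hfactor, mul_comm (x - u)]⟩

/-- The characteristic polynomial `det (x • 1 - M)` of the two-state matrix
`M = !![m1 - l1, l1; l2, m2 - l2]` with switching rates `l1` and `l2`, in expanded form and as a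
function of `x`; the theorem locates its roots relative to `m1` and `m2`. -/
def switchingQuadratic {R : Type*} [CommRing R] (l1 l2 m1 m2 x : R) : R :=
  x ^ 2 + (l1 - m1 + l2 - m2) * x + (l1 - m1) * (l2 - m2) - l1 * l2

namespace switchingQuadratic

section CommRing

variable {R : Type*} [CommRing R] (l1 l2 m1 m2 : R)

theorem apply_left : switchingQuadratic l1 l2 m1 m2 m1 = l1 * (m1 - m2) := by
  rw [switchingQuadratic]; ring

theorem apply_right : switchingQuadratic l1 l2 m1 m2 m2 = l2 * (m2 - m1) := by
  rw [switchingQuadratic]; ring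

theorem self_eq_mul (m x : R) :
    switchingQuadratic l1 l2 m m x = (x - (m - l1 - l2)) * (x - m) := by
  rw [switchingQuadratic]; ring

end CommRing

theorem exists_interlacing_roots {l1 l2 m1 m2 : ℝ} (hl1 : 0 < l1) (hl2 : 0 < l2)
    (hm : m1 < m2) :
    ∃ x1 x2 : ℝ, x1 < m1 ∧ m1 < x2 ∧ x2 < m2 ∧
      ∀ x, switchingQuadratic l1 l2 m1 m2 x = (x - x1) * (x - x2) := by
  have hleft : switchingQuadratic l1 l2 m1 m2 m1 < 0 := by
    rw [apply_left]
    exact mul_neg_of_pos_of_neg hl1 (sub_neg.2 hm)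
  have hright : 0 < switchingQuadratic l1 l2 m1 m2 m2 := by
    rw [apply_right]
    exact mul_pos hl2 (sub_pos.2 hm)
  have hmonic (x : ℝ) : switchingQuadratic l1 l2 m1 m2 x =
      1 * (x * x) + (l1 - m1 + l2 - m2) * x + ((l1 - m1) * (l2 - m2) - l1 * l2) := by
    rw [switchingQuadratic]; ring
  obtain ⟨x1, x2, hx1, hx2, hfactor⟩ :=
    exists_lt_lt_quadratic_eq_mul (by rwa [one_mul, ← hmonic])
  replace hfactor (x : ℝ) : switchingQuadratic l1 l2 m1 m2 x = (x - x1) * (x - x2) := by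
    rw [hmonic, hfactor, one_mul]
  rw [hfactor] at hright
  have hx2' : 0 < m2 - x2 := pos_of_mul_pos_right hright (sub_pos.2 (hx1.trans hm)).le
  exact ⟨x1, x2, hx1, hx2, sub_pos.1 hx2', hfactor⟩

end switchingQuadratic

/-- For λ₁, λ₂ > 0 and μ₁ ≤ μ₂, the quadratic
x² + (λ₁−μ₁+λ₂−μ₂)x + (λ₁−μ₁)(λ₂−μ₂) − λ₁λ₂ = 0 has two distinct real roots x₁ < x₂;
if μ₁ < μ₂ then x₁ < μ₁ < x₂ < μ₂, and if μ₁ = μ₂ then x₁ = μ₁ − λ₁ − λ₂ and x₂ = μ₁. -/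
theorem stmt_3 (l1 l2 m1 m2 : ℝ) (hl1 : 0 < l1) (hl2 : 0 < l2) (hm : m1 ≤ m2) :
    ∃ x1 x2 : ℝ, x1 < x2 ∧
      (∀ x : ℝ, x ^ 2 + (l1 - m1 + l2 - m2) * x + (l1 - m1) * (l2 - m2) - l1 * l2 = 0
          ↔ (x = x1 ∨ x = x2)) ∧
      (m1 < m2 → x1 < m1 ∧ m1 < x2 ∧ x2 < m2) ∧
      (m1 = m2 → x1 = m1 - l1 - l2 ∧ x2 = m1) := by
  have roots_iff {x1 x2 : ℝ}
      (hfactor : ∀ x, switchingQuadratic l1 l2 m1 m2 x = (x - x1) * (x - x2)) (x : ℝ) :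
      switchingQuadratic l1 l2 m1 m2 x = 0 ↔ x = x1 ∨ x = x2 := by
    rw [hfactor, mul_eq_zero, sub_eq_zero, sub_eq_zero]
  obtain hlt | rfl := hm.lt_or_eq
  · obtain ⟨x1, x2, hx1, hx2, hx2', hfactor⟩ :=
      switchingQuadratic.exists_interlacing_roots hl1 hl2 hlt
    exact ⟨x1, x2, hx1.trans hx2, roots_iff hfactor, fun _ => ⟨hx1, hx2, hx2'⟩,
      fun heq => absurd heq hlt.ne⟩
  · exact ⟨m1 - l1 - l2, m1, by linarith,
      roots_iff (switchingQuadratic.self_eq_mul l1 l2 m1),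
      fun hlt => absurd hlt (lt_irrefl m1), fun _ => ⟨rfl, rfl⟩⟩
end

section
/- Let λ₁, λ₂ > 0, μ₁ ≤ μ₂ real and r ∈ ℝ. If r ≤ μ₁, then r ≤ x₂. -/
/-!
The quadratic is `(x + l1 - m1) * (x + l2 - m2) - l1 * l2`, so at `x = m1` its value is
`l1 * (m1 - m2) ≤ 0`. A monic quadratic is nonpositive only between its roots.
-/

section

variable {R : Type*} [CommRing R]

theorem sq_add_mul_add_eq_mul_sub_of_roots [NoZeroDivisors R] {b c x y : R} (hxy : x ≠ y)
    (hx : x ^ 2 + b * x + c = 0) (hy : y ^ 2 + b * y + c = 0) (t : R) :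
    t ^ 2 + b * t + c = (t - x) * (t - y) := by
  have sum_roots : x + y + b = 0 := by
    refine (mul_eq_zero.mp ?_).resolve_left (sub_ne_zero.mpr hxy)
    linear_combination hx - hy
  linear_combination hx + (t - x) * sum_roots

variable [LinearOrder R] [IsStrictOrderedRing R]

theorem mem_Icc_roots_of_sq_add_mul_add_nonpos {b c x y t : R} (hxy : x < y)
    (hx : x ^ 2 + b * x + c = 0) (hy : y ^ 2 + b * y + c = 0) (ht : t ^ 2 + b * t + c ≤ 0) :
    t ∈ Set.Icc x y := by
  rw [sq_add_mul_add_eq_mul_sub_of_roots hxy.ne hx hy] at ht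
  exact (sub_mul_sub_nonpos_iff t hxy.le).mp ht

theorem stmt_4_general {l1 l2 m1 m2 x1 x2 : R} (hl1 : 0 ≤ l1) (hm : m1 ≤ m2) (hx12 : x1 < x2)
    (hx1 : x1 ^ 2 + (l1 - m1 + l2 - m2) * x1 + (l1 - m1) * (l2 - m2) - l1 * l2 = 0)
    (hx2 : x2 ^ 2 + (l1 - m1 + l2 - m2) * x2 + (l1 - m1) * (l2 - m2) - l1 * l2 = 0) :
    m1 ∈ Set.Icc x1 x2 := by
  rw [add_sub_assoc] at hx1 hx2
  refine mem_Icc_roots_of_sq_add_mul_add_nonpos hx12 hx1 hx2 ?_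
  calc m1 ^ 2 + (l1 - m1 + l2 - m2) * m1 + ((l1 - m1) * (l2 - m2) - l1 * l2)
      = l1 * (m1 - m2) := by ring
    _ ≤ 0 := mul_nonpos_of_nonneg_of_nonpos hl1 (sub_nonpos.mpr hm)

end

/-- For λ₁, λ₂ > 0, μ₁ ≤ μ₂ and r ∈ ℝ, with x₁ < x₂ the two roots of
x² + (λ₁−μ₁+λ₂−μ₂)x + (λ₁−μ₁)(λ₂−μ₂) − λ₁λ₂ = 0, if r ≤ μ₁ then r ≤ x₂. -/
theorem stmt_4 (l1 l2 m1 m2 r : ℝ) (hl1 : 0 < l1) (hl2 : 0 < l2) (hm : m1 ≤ m2)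
    (x1 x2 : ℝ) (hx12 : x1 < x2)
    (hroots : ∀ x : ℝ, x ^ 2 + (l1 - m1 + l2 - m2) * x + (l1 - m1) * (l2 - m2) - l1 * l2 = 0
        ↔ (x = x1 ∨ x = x2))
    (hr : r ≤ m1) :
    r ≤ x2 :=
  hr.trans
    (stmt_4_general hl1.le hm hx12 ((hroots x1).mpr (.inl rfl)) ((hroots x2).mpr (.inr rfl))).2
end

section
/- Let λ₁, λ₂ > 0, μ₁ ≤ μ₂ real and r ∈ ℝ. If r > μ₂, then r > x₂. -/
theorem quadratic_pos_of_lt_of_lt {R : Type*} [CommRing R] [PartialOrder R] [IsStrictOrderedRing R]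
    {l1 l2 m1 m2 x : R} (hl1 : 0 ≤ l1) (hl2 : 0 ≤ l2) (h1 : m1 < x) (h2 : m2 < x) :
    0 < x ^ 2 + (l1 - m1 + l2 - m2) * x + (l1 - m1) * (l2 - m2) - l1 * l2 := by
  have hx1 : 0 < x - m1 := sub_pos.2 h1
  have hx2 : 0 < x - m2 := sub_pos.2 h2
  calc
    0 < (x - m1) * (x - m2) + (l2 * (x - m1) + l1 * (x - m2)) :=
      add_pos_of_pos_of_nonneg (mul_pos hx1 hx2)
        (add_nonneg (mul_nonneg hl2 hx1.le) (mul_nonneg hl1 hx2.le))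
    _ = x ^ 2 + (l1 - m1 + l2 - m2) * x + (l1 - m1) * (l2 - m2) - l1 * l2 := by ring

theorem stmt_5_general {R : Type*} [CommRing R] [LinearOrder R] [IsStrictOrderedRing R]
    {l1 l2 m1 m2 x : R} (hl1 : 0 ≤ l1) (hl2 : 0 ≤ l2)
    (hroot : x ^ 2 + (l1 - m1 + l2 - m2) * x + (l1 - m1) * (l2 - m2) - l1 * l2 = 0) :
    x ≤ max m1 m2 := by
  by_contra! hlt
  obtain ⟨h1, h2⟩ := max_lt_iff.1 hlt
  exact (quadratic_pos_of_lt_of_lt hl1 hl2 h1 h2).ne' hroot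

/-- For λ₁, λ₂ > 0, μ₁ ≤ μ₂ and r ∈ ℝ, with x₁ < x₂ the two roots of
x² + (λ₁−μ₁+λ₂−μ₂)x + (λ₁−μ₁)(λ₂−μ₂) − λ₁λ₂ = 0, if r > μ₂ then r > x₂. -/
theorem stmt_5 (l1 l2 m1 m2 r : ℝ) (hl1 : 0 < l1) (hl2 : 0 < l2) (hm : m1 ≤ m2)
    (x1 x2 : ℝ) (hx12 : x1 < x2)
    (hroots : ∀ x : ℝ, x ^ 2 + (l1 - m1 + l2 - m2) * x + (l1 - m1) * (l2 - m2) - l1 * l2 = 0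
        ↔ (x = x1 ∨ x = x2))
    (hr : m2 < r) :
    x2 < r := by
  have hroot := (hroots x2).2 (Or.inr rfl)
  exact (stmt_5_general hl1.le hl2.le hroot).trans_lt (max_lt (hm.trans_lt hr) hr)
end

section
/- Let λ₁, λ₂ > 0, μ₁, μ₂ ∈ ℝ and r ∈ ℝ with r > x₂. Then r + λ₁ − μ₁ > 0, r + λ₂ − μ₂ > 0, and (r + λ₁ − μ₁)(r + λ₂ − μ₂) > λ₁λ₂. -/
/-!
The equation reads `(x - p₁) * (x - p₂) = λ₁ * λ₂` with `pᵢ = μᵢ - λᵢ`. Its monic left-hand side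
exceeds `λ₁ * λ₂` beyond the greatest root, but vanishes at `p₁` and `p₂`; since `0 ≤ λ₁ * λ₂`,
neither `pᵢ` lies beyond that root.
-/

section GreatestSolution

variable {R : Type*} [CommRing R] [LinearOrder R] [IsStrictOrderedRing R] {p q c x₀ : R}

theorem lt_sub_mul_sub_of_isGreatest (h : IsGreatest {x | (x - p) * (x - q) = c} x₀) {r : R}
    (hr : x₀ < r) : c < (r - p) * (r - q) := by
  have hx₀ : (x₀ - p) * (x₀ - q) = c := h.1
  obtain ⟨y, hy, hsum, hprod⟩ : ∃ y, y * y - (p + q) * y + (p * q - c) = 0 ∧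
      x₀ + y = p + q ∧ x₀ * y = p * q - c :=
    vieta_formula_quadratic (by linear_combination hx₀)
  have hyx₀ : y ≤ x₀ := h.2 (show (y - p) * (y - q) = c by linear_combination hy)
  have hfactor : (r - p) * (r - q) - c = (r - x₀) * (r - y) := by
    linear_combination r * hsum - hprod
  rw [← sub_pos, hfactor]
  exact mul_pos (sub_pos.2 hr) (sub_pos.2 (hyx₀.trans_lt hr))

theorem le_of_isGreatest_sub_mul_sub_eq (h : IsGreatest {x | (x - p) * (x - q) = c} x₀)
    (hc : 0 ≤ c) : p ≤ x₀ := by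
  by_contra! hp
  have hneg : c < (p - p) * (p - q) := lt_sub_mul_sub_of_isGreatest h hp
  rw [sub_self, zero_mul] at hneg
  exact hneg.not_ge hc

theorem stmt_6_general {l1 l2 m1 m2 r x2 : R} (hl : 0 ≤ l1 * l2)
    (hx2 : IsGreatest
      {x | x ^ 2 + (l1 - m1 + l2 - m2) * x + (l1 - m1) * (l2 - m2) - l1 * l2 = 0} x2)
    (hr : x2 < r) :
    0 < r + l1 - m1 ∧ 0 < r + l2 - m2 ∧ l1 * l2 < (r + l1 - m1) * (r + l2 - m2) := by
  have hleft : IsGreatest {x | (x - (m1 - l1)) * (x - (m2 - l2)) = l1 * l2} x2 := by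
    convert hx2 using 3 with x
    constructor <;> intro hx <;> linear_combination hx
  have hright : IsGreatest {x | (x - (m2 - l2)) * (x - (m1 - l1)) = l1 * l2} x2 := by
    simpa only [mul_comm] using hleft
  have h1 : m1 - l1 < r := (le_of_isGreatest_sub_mul_sub_eq hleft hl).trans_lt hr
  have h2 : m2 - l2 < r := (le_of_isGreatest_sub_mul_sub_eq hright hl).trans_lt hr
  have hmul := lt_sub_mul_sub_of_isGreatest hleft hr
  simp only [← sub_add, sub_add_eq_add_sub] at hmul
  exact ⟨by linarith, by linarith, hmul⟩

end GreatestSolution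

/-- For λ₁, λ₂ > 0, μ₁, μ₂ ∈ ℝ and r > x₂ (where x₁ < x₂ are the roots of
x² + (λ₁−μ₁+λ₂−μ₂)x + (λ₁−μ₁)(λ₂−μ₂) − λ₁λ₂ = 0), we have r + λ₁ − μ₁ > 0,
r + λ₂ − μ₂ > 0 and (r + λ₁ − μ₁)(r + λ₂ − μ₂) > λ₁λ₂. -/
theorem stmt_6 (l1 l2 m1 m2 r : ℝ) (hl1 : 0 < l1) (hl2 : 0 < l2)
    (x1 x2 : ℝ) (hx12 : x1 < x2)
    (hroots : ∀ x : ℝ, x ^ 2 + (l1 - m1 + l2 - m2) * x + (l1 - m1) * (l2 - m2) - l1 * l2 = 0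
        ↔ (x = x1 ∨ x = x2))
    (hr : x2 < r) :
    0 < r + l1 - m1 ∧ 0 < r + l2 - m2 ∧ l1 * l2 < (r + l1 - m1) * (r + l2 - m2) := by
  refine stmt_6_general (mul_nonneg hl1.le hl2.le) ⟨(hroots x2).2 (.inr rfl), fun x hx ↦ ?_⟩ hr
  exact ((hroots x).1 hx).elim (fun h ↦ h.trans_le hx12.le) le_of_eq
end

section
/- Let Q be a real polynomial of degree 4 with positive leading coefficient having four distinct real roots z₁ < z₂ < z₃ < z₄, and let c ∈ ℝ with c > z₂. If Q(c) > 0 and Q″(c) < 0, then c < z₃. -/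
/-!
Let `a > 0` be the leading coefficient of a split polynomial `Q`. The sign of
`Q(c) = a ∏ (c - zᵢ)` is determined by the parity of the number of roots beyond `c`, so `Q(c) > 0`
excludes exactly one such root. If no root lies beyond `c`, then each factor `X - zᵢ` and all its
derivatives are nonnegative at `c`, and by the Leibniz rule so are all derivatives of `Q`.
Hence `Q(c) > 0` together with a negative derivative at `c` forces two roots beyond `c`.
-/

open Polynomial

theorem eval_iterate_derivative_C_nonneg {R : Type*} [Semiring R] [Preorder R] {a c : R}
    (ha : 0 ≤ a) (k : ℕ) : 0 ≤ (derivative^[k] (C a)).eval c := by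
  rcases k with _ | k
  · simpa using ha
  · simp [iterate_derivative_C k.succ_pos]

theorem eval_iterate_derivative_X_sub_C_nonneg {R : Type*} [CommRing R] [PartialOrder R]
    [IsOrderedRing R] {r c : R} (hrc : r ≤ c) (k : ℕ) :
    0 ≤ (derivative^[k] (X - C r)).eval c := by
  rcases k with _ | k
  · simpa using hrc
  · rw [Function.iterate_succ_apply, derivative_X_sub_C, ← C_1]
    exact eval_iterate_derivative_C_nonneg zero_le_one k

section Leibniz

variable {R : Type*} [CommSemiring R] [PartialOrder R] [IsOrderedRing R] {c : R}

theorem eval_iterate_derivative_mul_nonneg {p q : R[X]}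
    (hp : ∀ k, 0 ≤ (derivative^[k] p).eval c) (hq : ∀ k, 0 ≤ (derivative^[k] q).eval c) (k : ℕ) :
    0 ≤ (derivative^[k] (p * q)).eval c := by
  simp only [iterate_derivative_mul, eval_finsetSum, eval_smul, eval_mul]
  exact Finset.sum_nonneg fun j _ ↦ nsmul_nonneg (mul_nonneg (hp (k - j)) (hq j)) _

theorem eval_iterate_derivative_multiset_prod_nonneg {s : Multiset R[X]}
    (hs : ∀ p ∈ s, ∀ k, 0 ≤ (derivative^[k] p).eval c) (k : ℕ) :
    0 ≤ (derivative^[k] s.prod).eval c :=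
  Multiset.prod_induction (fun p ↦ ∀ k, 0 ≤ (derivative^[k] p).eval c) s
    (fun _ _ ↦ eval_iterate_derivative_mul_nonneg)
    (eval_iterate_derivative_C_nonneg zero_le_one) hs k

end Leibniz

theorem roots_eq_map_of_degree_eq_card {R ι : Type*} [CommRing R] [IsDomain R] [Fintype ι]
    {Q : R[X]} {z : ι → R} (hdeg : Q.degree = Fintype.card ι) (hz : z.Injective)
    (hr : ∀ i, Q.eval (z i) = 0) : Q.roots = (Finset.univ : Finset ι).val.map z := by
  have hroots := roots_eq_of_degree_eq_card (p := Q) (S := Finset.univ.map ⟨z, hz⟩)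
    (by simpa using hr) (by simp [hdeg])
  simpa using hroots

section Ordered

variable {R : Type*} [CommRing R] [LinearOrder R] [IsStrictOrderedRing R] {Q : R[X]} {c : R}

theorem neg_one_pow_countP_mul_prod_map_sub_nonneg (s : Multiset R) :
    0 ≤ (-1) ^ s.countP (c < ·) * (s.map (c - ·)).prod := by
  induction s using Multiset.induction with
  | empty => simp
  | cons r s ih =>
    rw [Multiset.map_cons, Multiset.prod_cons]
    rcases lt_or_ge c r with hcr | hrc
    · rw [Multiset.countP_cons_of_pos (p := (c < ·)) s hcr]
      calc 0 ≤ (r - c) * ((-1) ^ s.countP (c < ·) * (s.map (c - ·)).prod) :=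
            mul_nonneg (sub_nonneg.2 hcr.le) ih
        _ = (-1) ^ (s.countP (c < ·) + 1) * ((c - r) * (s.map (c - ·)).prod) := by ring
    · rw [Multiset.countP_cons_of_neg (p := (c < ·)) s hrc.not_gt, mul_left_comm]
      exact mul_nonneg (sub_nonneg.2 hrc) ih

theorem neg_one_pow_countP_roots_mul_eval_nonneg (hQ : Q.Splits) (hlead : 0 ≤ Q.leadingCoeff) :
    0 ≤ (-1) ^ Q.roots.countP (c < ·) * Q.eval c := by
  rw [hQ.eval_eq_prod_roots, mul_left_comm]
  exact mul_nonneg hlead (neg_one_pow_countP_mul_prod_map_sub_nonneg Q.roots)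

theorem eval_iterate_derivative_nonneg_of_roots_le (hQ : Q.Splits) (hlead : 0 ≤ Q.leadingCoeff)
    (hroots : ∀ r ∈ Q.roots, r ≤ c) (k : ℕ) : 0 ≤ (derivative^[k] Q).eval c := by
  rw [hQ.eq_prod_roots]
  refine eval_iterate_derivative_mul_nonneg (eval_iterate_derivative_C_nonneg hlead)
    (eval_iterate_derivative_multiset_prod_nonneg ?_) k
  simp only [Multiset.forall_mem_map_iff]
  exact fun r hr ↦ eval_iterate_derivative_X_sub_C_nonneg (hroots r hr)

theorem one_lt_countP_roots_of_eval_iterate_derivative_neg (hQ : Q.Splits)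
    (hlead : 0 ≤ Q.leadingCoeff) (hQc : 0 < Q.eval c) {k : ℕ}
    (hk : (derivative^[k] Q).eval c < 0) : 1 < Q.roots.countP (c < ·) := by
  have hpos : 0 < Q.roots.countP (c < ·) := by
    rw [Multiset.countP_pos]
    by_contra! hroots
    exact hk.not_ge (eval_iterate_derivative_nonneg_of_roots_le hQ hlead hroots k)
  have hne_one : Q.roots.countP (c < ·) ≠ 1 := fun hone ↦ by
    have hsign := neg_one_pow_countP_roots_mul_eval_nonneg (c := c) hQ hlead
    rw [hone] at hsign
    linarith
  lia

theorem stmt_9_general {n : ℕ} (hdeg : Q.degree = (n + 2 : ℕ)) (hlead : 0 < Q.leadingCoeff)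
    {z : Fin (n + 2) → R} (hz : StrictMono z) (hr : ∀ i, Q.eval (z i) = 0)
    (hQc : 0 < Q.eval c) {k : ℕ} (hk : (derivative^[k] Q).eval c < 0) :
    c < z (Fin.last n).castSucc := by
  have hroots := roots_eq_map_of_degree_eq_card (by simpa using hdeg) hz.injective hr
  have hsplits : Q.Splits := by
    rw [splits_iff_card_roots, hroots, natDegree_eq_of_degree_eq_some hdeg]
    simp
  have hcount : 1 < (Finset.univ.filter (c < z ·)).card := by
    have hcountP := one_lt_countP_roots_of_eval_iterate_derivative_neg hsplits hlead.le hQc hk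
    rwa [hroots, Multiset.countP_map] at hcountP
  obtain ⟨i, hi, hi_ne⟩ := Finset.exists_mem_ne hcount (Fin.last (n + 1))
  have hi_le : i ≤ (Fin.last n).castSucc := by grind
  exact (Finset.mem_filter.1 hi).2.trans_le (hz.monotone hi_le)

end Ordered

/-- Let Q be a real polynomial of degree 4 with positive leading coefficient
having four distinct real roots z₁ < z₂ < z₃ < z₄, and c > z₂. If Q(c) > 0 and Q″(c) < 0,
then c < z₃. -/
theorem stmt_9 (Q : Polynomial ℝ) (hdeg : Q.degree = 4) (hlead : 0 < Q.leadingCoeff)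
    (z1 z2 z3 z4 : ℝ) (h12 : z1 < z2) (h23 : z2 < z3) (h34 : z3 < z4)
    (hr1 : Q.eval z1 = 0) (hr2 : Q.eval z2 = 0) (hr3 : Q.eval z3 = 0) (hr4 : Q.eval z4 = 0)
    (c : ℝ) (hc : z2 < c) (hQc : 0 < Q.eval c)
    (hQ''c : (Polynomial.derivative (Polynomial.derivative Q)).eval c < 0) :
    c < z3 :=
  stmt_9_general (n := 2) (z := ![z1, z2, z3, z4]) (k := 2) hdeg hlead
    (by simp [Fin.strictMono_iff_lt_succ, Fin.forall_fin_succ, *])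
    (by simp [Fin.forall_fin_succ, *]) hQc hQ''c
end

section
/- Let Q be a real polynomial of degree 4 with positive leading coefficient having four distinct real roots z₁ < z₂ < z₃ < z₄, and let c ∈ ℝ with c > z₂. If Q(c) > 0 and Q‴(c) < 0, then c < z₃. -/
/-!
Let `p` have degree `n`, leading coefficient `a` and roots `zᵢ`, with multiplicity. Then `p(c)` is
`a` times the product of the numbers `c - zᵢ`, while the derivative of order `n - 1` at `c` is
`(n - 1)! a` times their sum. A negative sum forces one of these numbers to be negative, and a
positive product then forces a second one, so at least two roots exceed `c`.
-/

open Finset Polynomial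
open scoped Nat

theorem eval_iterate_derivative_of_natDegree_le {R : Type*} [Semiring R] {p : R[X]} {n : ℕ}
    (hp : p.natDegree ≤ n + 1) (x : R) :
    (derivative^[n] p).eval x = n ! * (p.coeff n + (n + 1) * p.coeff (n + 1) * x) := by
  have hdeg : (derivative^[n] p).natDegree < 2 := by
    have := natDegree_iterate_derivative p n
    omega
  have hfact : (n + 1).descFactorial n = n ! * (n + 1) := by
    rw [Nat.descFactorial_eq_factorial_mul_choose, Nat.choose_succ_self_right]
  rw [eval_eq_sum_range' hdeg, sum_range_succ, sum_range_one]
  simp [coeff_iterate_derivative, Nat.descFactorial_self, add_comm 1 n, hfact, mul_add, add_mul,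
    mul_assoc]

theorem eval_iterate_derivative_eq_sum_roots {R : Type*} [CommRing R] [IsDomain R] {p : R[X]}
    {n : ℕ} (hp : p.Splits) (hdeg : p.natDegree = n + 1) (x : R) :
    (derivative^[n] p).eval x = n ! * (p.leadingCoeff * (p.roots.map (x - ·)).sum) := by
  have hnext : p.coeff n = -p.leadingCoeff * p.roots.sum := by
    rw [← hp.nextCoeff_eq_neg_sum_roots_mul_leadingCoeff,
      nextCoeff_of_natDegree_pos (hdeg ▸ n.succ_pos), hdeg, Nat.add_sub_cancel]
  have hsum : (p.roots.map (x - ·)).sum = (n + 1) * x - p.roots.sum := by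
    rw [Multiset.sum_map_sub, Multiset.map_id']
    simp [← hp.natDegree_eq_card_roots, hdeg, add_mul, add_comm]
  rw [eval_iterate_derivative_of_natDegree_le hdeg.le, hnext, hsum, ← hdeg, coeff_natDegree]
  ring

theorem roots_eq_map_univ_of_injective {R ι : Type*} [CommRing R] [IsDomain R] [Fintype ι]
    {p : R[X]} {z : ι → R} (hz : Function.Injective z) (hdeg : p.degree = Fintype.card ι)
    (hroot : ∀ i, p.eval (z i) = 0) : p.roots = univ.val.map z :=
  roots_eq_of_degree_eq_card (S := univ.map ⟨z, hz⟩) (by simpa using hroot) (by simp [hdeg])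

section LinearOrder

variable {R : Type*} [CommRing R] [LinearOrder R] [IsStrictOrderedRing R] {n : ℕ}

theorem apply_castSucc_last_neg_of_antitone {d : Fin (n + 2) → R} (hd : Antitone d)
    (hprod : 0 < ∏ i, d i) (hsum : ∑ i, d i < 0) : d (Fin.last n).castSucc < 0 := by
  by_contra! hlast
  have hinit (i : Fin (n + 1)) : 0 ≤ d i.castSucc :=
    hlast.trans (hd (Fin.castSucc_le_castSucc_iff.mpr i.le_last))
  have hneg : d (Fin.last (n + 1)) < 0 := by
    rw [Fin.sum_univ_castSucc] at hsum
    linarith [sum_nonneg fun i (_ : i ∈ univ) => hinit i]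
  rw [Fin.prod_univ_castSucc] at hprod
  exact hprod.not_ge (mul_nonpos_of_nonneg_of_nonpos (prod_nonneg fun i _ => hinit i) hneg.le)

theorem stmt_10_general {p : R[X]} (hdeg : p.natDegree = n + 2) (hlead : 0 < p.leadingCoeff)
    {z : Fin (n + 2) → R} (hz : Monotone z) (hroots : p.roots = univ.val.map z) {c : R}
    (hpc : 0 < p.eval c) (hderiv : (derivative^[n + 1] p).eval c < 0) :
    c < z (Fin.last n).castSucc := by
  have hsplits : p.Splits := splits_iff_card_roots.mpr (by simp [hroots, hdeg])
  have hprod : 0 < ∏ i, (c - z i) := by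
    rw [hsplits.eval_eq_prod_roots, hroots, Multiset.map_map] at hpc
    exact pos_of_mul_pos_right hpc hlead.le
  have hsum : ∑ i, (c - z i) < 0 := by
    rw [eval_iterate_derivative_eq_sum_roots hsplits hdeg, hroots, Multiset.map_map] at hderiv
    exact neg_of_mul_neg_right (neg_of_mul_neg_right hderiv (Nat.cast_nonneg _)) hlead.le
  have hanti : Antitone fun i => c - z i := fun _ _ hij => sub_le_sub_left (hz hij) c
  exact sub_neg.mp (apply_castSucc_last_neg_of_antitone hanti hprod hsum)

end LinearOrder

/-- Let Q be a real polynomial of degree 4 with positive leading coefficient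
having four distinct real roots z₁ < z₂ < z₃ < z₄, and c > z₂. If Q(c) > 0 and Q‴(c) < 0,
then c < z₃. -/
theorem stmt_10 (Q : Polynomial ℝ) (hdeg : Q.degree = 4) (hlead : 0 < Q.leadingCoeff)
    (z1 z2 z3 z4 : ℝ) (h12 : z1 < z2) (h23 : z2 < z3) (h34 : z3 < z4)
    (hr1 : Q.eval z1 = 0) (hr2 : Q.eval z2 = 0) (hr3 : Q.eval z3 = 0) (hr4 : Q.eval z4 = 0)
    (c : ℝ) (hc : z2 < c) (hQc : 0 < Q.eval c)
    (hQ'''c : (Polynomial.derivative (Polynomial.derivative (Polynomial.derivative Q))).eval c < 0) :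
    c < z3 := by
  have hz : StrictMono ![z1, z2, z3, z4] := by simp [h12, h23, h34]
  have hroots := roots_eq_map_univ_of_injective hz.injective (p := Q) (by simpa using hdeg)
    (by simp [Fin.forall_fin_succ, hr1, hr2, hr3, hr4])
  exact stmt_10_general (natDegree_eq_of_degree_eq_some hdeg) hlead hz.monotone hroots hQc hQ'''c
end

section
/- Let r, λ₁, λ₂, C, K > 0. Then the pair (v₁, v₂) = (−min{C/r, K}, −min{C/r, K}) is the unique pair of real numbers satisfying the system min{(r + λ₁)v₁ − λ₁v₂ + C, v₁ + K} = 0 and min{(r + λ₂)v₂ − λ₂v₁ + C, v₂ + K} = 0. -/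
/-!
The argument is the maximum principle. If `v i - w i` is positive and maximal at `i`, then the
coupling terms `a i j * (v i - v j)` are at least those of `w`, while the discount term and the
obstacle term strictly increase. So the left-hand side of the system is an inverse-monotone, hence
injective, map of the unknowns, and it remains to find one constant solution. Along constants the
coupling vanishes, which leaves the scalar equation `min (r * c + C) (c + K) = 0`.
-/

variable {ι R 𝕜 : Type*} [Fintype ι]

section Comparison

variable [CommRing R] [LinearOrder R]

/-- Left-hand side of the obstacle system with finitely many regimes `i : ι`, as a function of the
values `v`: discount rates `r i`, switching rates `a i j` from `i` to `j`, running costs `C i` and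
obstacles `-K i`. The coupling is written through differences, so the diagonal of `a` is
irrelevant. -/
def obstacleResidual (r : ι → R) (a : ι → ι → R) (C K v : ι → R) (i : ι) : R :=
  min (r i * v i + ∑ j, a i j * (v i - v j) + C i) (v i + K i)

variable [IsStrictOrderedRing R] {r : ι → R} {a : ι → ι → R} {C K v w : ι → R}

lemma obstacleResidual_lt_of_forall_sub_le {i : ι} (hr : 0 < r i) (ha : ∀ j, 0 ≤ a i j)
    (hmax : ∀ j, v j - w j ≤ v i - w i) (hlt : w i < v i) :
    obstacleResidual r a C K w i < obstacleResidual r a C K v i := by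
  have hdiscount : r i * w i < r i * v i := mul_lt_mul_of_pos_left hlt hr
  have hcoupling : ∑ j, a i j * (w i - w j) ≤ ∑ j, a i j * (v i - v j) :=
    Finset.sum_le_sum fun j _ ↦
      mul_le_mul_of_nonneg_left (by linarith [hmax j]) (ha j)
  exact min_lt_min (by linarith) (by linarith)

lemma le_of_obstacleResidual_le (hr : ∀ i, 0 < r i) (ha : ∀ i j, 0 ≤ a i j)
    (h : obstacleResidual r a C K v ≤ obstacleResidual r a C K w) : v ≤ w := by
  intro k
  have : Nonempty ι := ⟨k⟩
  obtain ⟨i, hmax⟩ := Finite.exists_max fun j ↦ v j - w j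
  have hi : v i ≤ w i := by
    by_contra! hlt
    exact (obstacleResidual_lt_of_forall_sub_le (hr i) (ha i) hmax hlt).not_ge (h i)
  exact sub_nonpos.1 ((hmax k).trans (sub_nonpos.2 hi))

lemma obstacleResidual_injective (hr : ∀ i, 0 < r i) (ha : ∀ i j, 0 ≤ a i j) :
    Function.Injective (obstacleResidual r a C K) := fun _ _ h ↦
  le_antisymm (le_of_obstacleResidual_le hr ha h.le) (le_of_obstacleResidual_le hr ha h.ge)

end Comparison

section ConstantSolution

variable [Field 𝕜] [LinearOrder 𝕜] [IsStrictOrderedRing 𝕜] {r : 𝕜}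

lemma min_mul_neg_min_div_add_eq_zero (hr : 0 < r) (C K : 𝕜) :
    min (r * -min (C / r) K + C) (-min (C / r) K + K) = 0 := by
  have hC : r * (C / r) = C := mul_div_cancel₀ C hr.ne'
  rcases le_total (C / r) K with h | h
  · rw [min_eq_left h, mul_neg, hC, neg_add_cancel]
    exact min_eq_left (by linarith)
  · have hK : r * K ≤ C := (le_div_iff₀' hr).1 h
    rw [min_eq_right h, neg_add_cancel]
    exact min_eq_right (by linarith)

theorem stmt_17_general (hr : 0 < r) {a : ι → ι → 𝕜} (ha : ∀ i j, 0 ≤ a i j) (C K : 𝕜)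
    (v : ι → 𝕜) :
    obstacleResidual (fun _ ↦ r) a (fun _ ↦ C) (fun _ ↦ K) v = 0 ↔
      v = fun _ ↦ -min (C / r) K := by
  have hconst : obstacleResidual (fun _ : ι ↦ r) a (fun _ ↦ C) (fun _ ↦ K)
      (fun _ ↦ -min (C / r) K) = 0 := by
    funext i
    simpa only [obstacleResidual, sub_self, mul_zero, Finset.sum_const_zero, add_zero,
      Pi.zero_apply] using min_mul_neg_min_div_add_eq_zero hr C K
  rw [← hconst, (obstacleResidual_injective (fun _ ↦ hr) ha).eq_iff]

end ConstantSolution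

lemma obstacleResidual_fin_two [CommRing R] [LinearOrder R] (r l₁ l₂ C K v₁ v₂ : R) :
    obstacleResidual (fun _ ↦ r) !![0, l₁; l₂, 0] (fun _ ↦ C) (fun _ ↦ K) ![v₁, v₂] =
      ![min ((r + l₁) * v₁ - l₁ * v₂ + C) (v₁ + K),
        min ((r + l₂) * v₂ - l₂ * v₁ + C) (v₂ + K)] := by
  ext i
  fin_cases i <;> simp [obstacleResidual, add_mul, mul_sub, add_sub_assoc]

/-- For r, λ₁, λ₂, C, K > 0, the pair
(v₁, v₂) = (−min{C/r, K}, −min{C/r, K}) is the unique solution of the system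
min{(r+λ₁)v₁ − λ₁v₂ + C, v₁ + K} = 0 and min{(r+λ₂)v₂ − λ₂v₁ + C, v₂ + K} = 0. -/
theorem stmt_17 (r l1 l2 C K : ℝ)
    (hr : 0 < r) (hl1 : 0 < l1) (hl2 : 0 < l2) (hC : 0 < C) (hK : 0 < K) :
    ∀ v1 v2 : ℝ,
      (min ((r + l1) * v1 - l1 * v2 + C) (v1 + K) = 0 ∧
        min ((r + l2) * v2 - l2 * v1 + C) (v2 + K) = 0) ↔
      (v1 = -min (C / r) K ∧ v2 = -min (C / r) K) := by
  intro v1 v2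
  have ha : ∀ i j, 0 ≤ !![0, l1; l2, 0] i j := by simp [Fin.forall_fin_two, hl1.le, hl2.le]
  simpa [obstacleResidual_fin_two, funext_iff, Fin.forall_fin_two]
    using stmt_17_general hr ha C K ![v1, v2]
end
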